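/- arXiv:1201.5447 — 3 statements merged into one kernel-verified Lean document; each statement's English description precedes it below -/
import Mathlib

section
/- Let n = 3 and l_1, l_2, l_3 > 0. If (β_2, β_3) is a critical point of A(β_2, β_3) = l_1 l_2 sin β_2 + l_1 l_3 sin β_3 + l_2 l_3 sin(β_3 − β_2), then the length d = |r_3| of the connecting segment r_0 r_3 satisfies one of the two cubic equations d³ = (l_1² + l_2² + l_3²) d + 2 l_1 l_2 l_3 or d³ = (l_1² + l_2² + l_3²) d − 2 l_1 l_2 l_3. -/
/- Planar 3-arm with edge lengths `l₁, l₂, l₃ > 0`, angle coordinates `β₂, β₃`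
(and `β₁ = 0`).  Vertices: `r₀ = (0,0)`, `r₁ = (l₁, 0)`,
`r₂ = r₁ + l₂ (cos β₂, sin β₂)`, `r₃ = r₂ + l₃ (cos β₃, sin β₃)`.  The doubled
oriented area is `A(β₂,β₃) = l₁l₂ sin β₂ + l₁l₃ sin β₃ + l₂l₃ sin (β₃ − β₂)`. -/

noncomputable section

/-- the doubled oriented area of the 3-arm. -/
def area3 (l₁ l₂ l₃ : ℝ) (b₂ b₃ : ℝ) : ℝ :=
  l₁ * l₂ * Real.sin b₂ + l₁ * l₃ * Real.sin b₃ + l₂ * l₃ * Real.sin (b₃ - b₂)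

/-!
Write `u, v, w` for the three edge vectors. The partial derivatives of the area are
`⟪u, v⟫ - ⟪v, w⟫` and `⟪u, w⟫ + ⟪v, w⟫`, so at a critical point all pairwise inner products are
`± k` with `k = ⟪v, w⟫`. Expanding the square of `d = ‖u + v + w‖` gives
`d² = ‖u‖² + ‖v‖² + ‖w‖² + 2k`, while the Gram determinant of three vectors in the plane vanishes,
which at a critical point reads `‖u‖²‖v‖²‖w‖² = k²d²`. Hence `k d = ± ‖u‖‖v‖‖w‖`, and multiplying
the first identity by `d` gives the two cubics.
-/

open scoped RealInnerProductSpace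

section Gram

variable {𝕜 E ι : Type*} [RCLike 𝕜] [SeminormedAddCommGroup E] [InnerProductSpace 𝕜 E]
  [FiniteDimensional 𝕜 E] [Fintype ι] [DecidableEq ι]

theorem det_gram_eq_zero_of_finrank_lt_card (v : ι → E)
    (h : Module.finrank 𝕜 E < Fintype.card ι) : (Matrix.gram 𝕜 v).det = 0 := by
  by_contra hdet
  exact h.not_ge (Matrix.linearIndependent_of_det_gram_ne_zero hdet).fintype_card_le_finrank

end Gram

section ThreeVectors

variable {E : Type*} [SeminormedAddCommGroup E] [InnerProductSpace ℝ E] {u v w : E}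

theorem det_gram_fin_three (u v w : E) :
    (Matrix.gram ℝ ![u, v, w]).det =
      ‖u‖ ^ 2 * ‖v‖ ^ 2 * ‖w‖ ^ 2 + 2 * ⟪u, v⟫ * ⟪v, w⟫ * ⟪u, w⟫
        - ‖u‖ ^ 2 * ⟪v, w⟫ ^ 2 - ‖v‖ ^ 2 * ⟪u, w⟫ ^ 2 - ‖w‖ ^ 2 * ⟪u, v⟫ ^ 2 := by
  simp only [Matrix.det_fin_three, Matrix.gram_apply, Matrix.cons_val, real_inner_self_eq_norm_sq,
    real_inner_comm u v, real_inner_comm u w, real_inner_comm v w]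
  ring

theorem norm_add_add_sq_real (u v w : E) :
    ‖u + v + w‖ ^ 2 =
      ‖u‖ ^ 2 + ‖v‖ ^ 2 + ‖w‖ ^ 2 + 2 * ⟪u, v⟫ + 2 * ⟪u, w⟫ + 2 * ⟪v, w⟫ := by
  rw [norm_add_sq_real, norm_add_sq_real, inner_add_left]
  ring

theorem norm_add_add_sq_of_inner_eq (huv : ⟪u, v⟫ = ⟪v, w⟫) (huw : ⟪u, w⟫ = -⟪v, w⟫) :
    ‖u + v + w‖ ^ 2 = ‖u‖ ^ 2 + ‖v‖ ^ 2 + ‖w‖ ^ 2 + 2 * ⟪v, w⟫ := by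
  rw [norm_add_add_sq_real, huv, huw]
  ring

theorem inner_mul_norm_add_add_sq_of_det_gram_eq_zero
    (hdet : (Matrix.gram ℝ ![u, v, w]).det = 0)
    (huv : ⟪u, v⟫ = ⟪v, w⟫) (huw : ⟪u, w⟫ = -⟪v, w⟫) :
    (⟪v, w⟫ * ‖u + v + w‖) ^ 2 = (‖u‖ * ‖v‖ * ‖w‖) ^ 2 := by
  rw [det_gram_fin_three, huv, huw] at hdet
  rw [mul_pow, norm_add_add_sq_of_inner_eq huv huw]
  linear_combination -hdet

theorem norm_add_add_cubic_of_det_gram_eq_zero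
    (hdet : (Matrix.gram ℝ ![u, v, w]).det = 0)
    (huv : ⟪u, v⟫ = ⟪v, w⟫) (huw : ⟪u, w⟫ = -⟪v, w⟫) :
    ‖u + v + w‖ ^ 3 =
        (‖u‖ ^ 2 + ‖v‖ ^ 2 + ‖w‖ ^ 2) * ‖u + v + w‖ + 2 * ‖u‖ * ‖v‖ * ‖w‖ ∨
      ‖u + v + w‖ ^ 3 =
        (‖u‖ ^ 2 + ‖v‖ ^ 2 + ‖w‖ ^ 2) * ‖u + v + w‖ - 2 * ‖u‖ * ‖v‖ * ‖w‖ := by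
  have hsq := norm_add_add_sq_of_inner_eq huv huw
  have hprod := inner_mul_norm_add_add_sq_of_det_gram_eq_zero hdet huv huw
  refine (sq_eq_sq_iff_eq_or_eq_neg.mp hprod).imp (fun h => ?_) (fun h => ?_) <;>
    linear_combination ‖u + v + w‖ * hsq + 2 * h

end ThreeVectors

/-- The edge vector of signed length `l` at angle `β`, in the Euclidean plane. -/
def edge (l β : ℝ) : EuclideanSpace ℝ (Fin 2) :=
  !₂[l * Real.cos β, l * Real.sin β]

theorem inner_edge (l m α β : ℝ) : ⟪edge l α, edge m β⟫ = l * m * Real.cos (β - α) := by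
  simp only [edge, PiLp.inner_apply, Fin.sum_univ_two, Matrix.cons_val, RCLike.inner_apply,
    conj_trivial, Real.cos_sub]
  ring

theorem norm_edge (l β : ℝ) : ‖edge l β‖ = |l| := by
  rw [norm_eq_sqrt_real_inner, inner_edge, sub_self, Real.cos_zero, mul_one,
    Real.sqrt_mul_self_eq_abs]

theorem norm_sum_edge {ι : Type*} (s : Finset ι) (l β : ι → ℝ) :
    ‖∑ i ∈ s, edge (l i) (β i)‖ =
      √((∑ i ∈ s, l i * Real.cos (β i)) ^ 2 + (∑ i ∈ s, l i * Real.sin (β i)) ^ 2) := by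
  simp [EuclideanSpace.norm_eq, edge, Fin.sum_univ_two]

theorem hasDerivAt_area3_left (l₁ l₂ l₃ b₂ b₃ : ℝ) :
    HasDerivAt (fun t => area3 l₁ l₂ l₃ t b₃)
      (⟪edge l₁ 0, edge l₂ b₂⟫ - ⟪edge l₂ b₂, edge l₃ b₃⟫) b₂ := by
  have h := (((Real.hasDerivAt_sin b₂).const_mul (l₁ * l₂)).add_const
    (l₁ * l₃ * Real.sin b₃)).add
    ((((hasDerivAt_id b₂).const_sub b₃).sin).const_mul (l₂ * l₃))
  refine h.congr_deriv ?_
  simp only [inner_edge, id_eq, sub_zero]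
  ring

theorem hasDerivAt_area3_right (l₁ l₂ l₃ b₂ b₃ : ℝ) :
    HasDerivAt (fun t => area3 l₁ l₂ l₃ b₂ t)
      (⟪edge l₁ 0, edge l₃ b₃⟫ + ⟪edge l₂ b₂, edge l₃ b₃⟫) b₃ := by
  have h := (((Real.hasDerivAt_sin b₃).const_mul (l₁ * l₃)).const_add
    (l₁ * l₂ * Real.sin b₂)).add
    ((((hasDerivAt_id b₃).sub_const b₂).sin).const_mul (l₂ * l₃))
  refine h.congr_deriv ?_
  simp only [inner_edge, id_eq, sub_zero]
  ring

/-- At a critical point of `A`, the length `d = |r₃|` of the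
connecting segment `r₀ r₃` satisfies one of the two cubic equations
`d³ = (l₁² + l₂² + l₃²) d ± 2 l₁ l₂ l₃`. -/
theorem connecting_length_cubic (l₁ l₂ l₃ : ℝ) (h₁ : 0 < l₁) (h₂ : 0 < l₂) (h₃ : 0 < l₃)
    (b₂ b₃ : ℝ)
    (hcrit₂ : deriv (fun t => area3 l₁ l₂ l₃ t b₃) b₂ = 0)
    (hcrit₃ : deriv (fun t => area3 l₁ l₂ l₃ b₂ t) b₃ = 0)
    (d : ℝ)
    (hd : d = Real.sqrt ((l₁ + l₂ * Real.cos b₂ + l₃ * Real.cos b₃) ^ 2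
        + (l₂ * Real.sin b₂ + l₃ * Real.sin b₃) ^ 2)) :
    d ^ 3 = (l₁ ^ 2 + l₂ ^ 2 + l₃ ^ 2) * d + 2 * l₁ * l₂ * l₃ ∨
      d ^ 3 = (l₁ ^ 2 + l₂ ^ 2 + l₃ ^ 2) * d - 2 * l₁ * l₂ * l₃ := by
  have hnorm : d = ‖edge l₁ 0 + edge l₂ b₂ + edge l₃ b₃‖ := by
    have h := norm_sum_edge Finset.univ ![l₁, l₂, l₃] ![0, b₂, b₃]
    simpa [Fin.sum_univ_three, hd] using h.symm
  have huv := sub_eq_zero.mp ((hasDerivAt_area3_left l₁ l₂ l₃ b₂ b₃).deriv.symm.trans hcrit₂)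
  have huw :=
    eq_neg_of_add_eq_zero_left ((hasDerivAt_area3_right l₁ l₂ l₃ b₂ b₃).deriv.symm.trans hcrit₃)
  have hdet : (Matrix.gram ℝ ![edge l₁ 0, edge l₂ b₂, edge l₃ b₃]).det = 0 :=
    det_gram_eq_zero_of_finrank_lt_card _ (by simp)
  simpa only [← hnorm, norm_edge, abs_of_pos h₁, abs_of_pos h₂, abs_of_pos h₃] using
    norm_add_add_cubic_of_det_gram_eq_zero hdet huv huw

end
end

section
/- For any l_1, l_2, l_3 > 0, each of the two cubic equations d³ = (l_1² + l_2² + l_3²) d + 2 l_1 l_2 l_3 and d³ = (l_1² + l_2² + l_3²) d − 2 l_1 l_2 l_3 has exactly one real solution d satisfying d ≥ l_1 and d ≥ l_3. -/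
/- `l₁, l₂, l₃` are the positive edge lengths of a planar 3-arm; `d` is the length of
the connecting segment, which at a critical configuration is the diameter of the
circumscribed circle and hence at least each of the chords `l₁` and `l₃`. -/

/-!
The two cubics differ by the sign of `l₂`, so it suffices to treat
`f d = d³ - (l₁² + l₂² + l₃²) d - 2 l₁ l₂ l₃` with `l₂` of arbitrary sign; by symmetry let
`l₃ ≤ l₁`. Then `f l₁ = -l₁ (l₂ + l₃)² ≤ 0`, so `f` has a root in `[l₁, ∞)`. Two roots there
would force `f l₁ ≥ 0`, since the third root is negative; hence `f l₁ = 0`, `l₁` is the smaller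
of the two, and `f` has negative slope at `l₁`. But `f l₁ = 0` means `l₂ = -l₃`, and then this
slope is `2 (l₁² - l₃²) ≥ 0`.
-/

section DepressedCubic

open Filter

lemma sq_add_mul_add_sq_eq_of_cube_eq {R : Type*} [CommRing R] [NoZeroDivisors R]
    {p q x y : R} (hx : x ^ 3 = p * x + q) (hy : y ^ 3 = p * y + q) (hxy : x ≠ y) :
    x ^ 2 + x * y + y ^ 2 = p :=
  mul_left_cancel₀ (sub_ne_zero.mpr hxy) (by linear_combination hx - hy)

lemma cube_eq_and_three_mul_sq_lt_of_lt {R : Type*} [CommRing R] [LinearOrder R]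
    [IsStrictOrderedRing R] {p q a x y : R} (ha : 0 ≤ a) (h : a ^ 3 ≤ p * a + q)
    (hx : x ^ 3 = p * x + q) (hy : y ^ 3 = p * y + q) (hax : a ≤ x) (hxy : x < y) :
    a ^ 3 = p * a + q ∧ 3 * a ^ 2 < p := by
  have hp := sq_add_mul_add_sq_eq_of_cube_eq hx hy hxy.ne
  -- The roots of a depressed cubic sum to zero, so the third root is `-(x + y)`.
  have hfactor : (x - a) * ((y - a) * (a + x + y)) = a ^ 3 - (p * a + q) := by
    linear_combination (x - a) * hp - hx
  have hpos : 0 < (y - a) * (a + x + y) := mul_pos (by linarith) (by linarith)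
  have hxa : x ≤ a := sub_nonpos.mp (nonpos_of_mul_nonpos_left (by linarith) hpos)
  obtain rfl : x = a := hxa.antisymm hax
  have hgap : 0 < (y - x) * (y + 2 * x) := mul_pos (by linarith) (by linarith)
  exact ⟨hx, by linarith only [hgap, hp]⟩

lemma exists_ge_cube_eq {p q a : ℝ} (h : a ^ 3 ≤ p * a + q) :
    ∃ d, a ≤ d ∧ d ^ 3 = p * d + q := by
  have hlim : Tendsto (fun d : ℝ => d * (d ^ 2 - p)) atTop atTop :=
    tendsto_id.atTop_mul_atTop₀
      (tendsto_atTop_add_const_right atTop (-p) (tendsto_pow_atTop two_ne_zero))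
  obtain ⟨d, hd, hroot⟩ : q ∈ (fun d : ℝ => d * (d ^ 2 - p)) '' Set.Ici a :=
    isPreconnected_Ici.intermediate_value_Ici Set.self_mem_Ici
      (le_principal_iff.mpr (Ici_mem_atTop a)) (by fun_prop) hlim
      (show a * (a ^ 2 - p) ≤ q by linarith)
  exact ⟨d, hd, by linear_combination hroot⟩

lemma existsUnique_ge_cube_eq {p q a : ℝ} (ha : 0 ≤ a) (h : a ^ 3 ≤ p * a + q)
    (hderiv : a ^ 3 = p * a + q → p ≤ 3 * a ^ 2) :
    ∃! d, d ^ 3 = p * d + q ∧ a ≤ d := by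
  have hroots {x y : ℝ} (hx : x ^ 3 = p * x + q) (hax : a ≤ x) (hy : y ^ 3 = p * y + q) :
      y ≤ x := by
    by_contra! hxy
    obtain ⟨hroot, hlt⟩ := cube_eq_and_three_mul_sq_lt_of_lt ha h hx hy hax hxy
    exact hlt.not_ge (hderiv hroot)
  obtain ⟨d, had, hd⟩ := exists_ge_cube_eq h
  exact ⟨d, ⟨hd, had⟩, fun y ⟨hy, hay⟩ => (hroots hd had hy).antisymm (hroots hy hay hd)⟩

end DepressedCubic

lemma existsUnique_ge_diameter_cubic {a c : ℝ} (e : ℝ) (ha : 0 < a) (hca : c ^ 2 ≤ a ^ 2) :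
    ∃! d : ℝ, d ^ 3 = (a ^ 2 + e ^ 2 + c ^ 2) * d + 2 * a * e * c ∧ a ≤ d := by
  have hvalue : (a ^ 2 + e ^ 2 + c ^ 2) * a + 2 * a * e * c = a ^ 3 + a * (e + c) ^ 2 := by
    ring
  refine existsUnique_ge_cube_eq ha.le ?_ fun hroot => ?_
  · rw [hvalue]
    exact le_add_of_nonneg_right (by positivity)
  · have hec : e + c = 0 := by simpa [hvalue, ha.ne'] using hroot
    obtain rfl : e = -c := eq_neg_of_add_eq_zero_left hec
    linarith [neg_sq c]

theorem cubic_unique_root_general (l₁ l₂ l₃ : ℝ) (h : 0 < l₁ + l₃) :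
    ∃! d : ℝ, d ^ 3 = (l₁ ^ 2 + l₂ ^ 2 + l₃ ^ 2) * d + 2 * l₁ * l₂ * l₃ ∧
      l₁ ≤ d ∧ l₃ ≤ d := by
  wlog hle : l₃ ≤ l₁ generalizing l₁ l₃
  · convert this l₃ l₁ (by linarith) (le_of_not_ge hle) using 3 with d
    · ring_nf
    · exact and_comm
  have hsq : l₃ ^ 2 ≤ l₁ ^ 2 := sq_le_sq' (by linarith) hle
  simpa only [and_iff_left_of_imp hle.trans] using
    existsUnique_ge_diameter_cubic l₂ (by linarith) hsq

/-- Each of the two cubic equations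
`d³ = (l₁² + l₂² + l₃²) d ± 2 l₁ l₂ l₃` has exactly one real solution `d` with
`d ≥ l₁` and `d ≥ l₃`. -/
theorem cubic_unique_root (l₁ l₂ l₃ : ℝ) (h₁ : 0 < l₁) (h₂ : 0 < l₂) (h₃ : 0 < l₃) :
    (∃! d : ℝ, d ^ 3 = (l₁ ^ 2 + l₂ ^ 2 + l₃ ^ 2) * d + 2 * l₁ * l₂ * l₃ ∧
        l₁ ≤ d ∧ l₃ ≤ d) ∧
    (∃! d : ℝ, d ^ 3 = (l₁ ^ 2 + l₂ ^ 2 + l₃ ^ 2) * d - 2 * l₁ * l₂ * l₃ ∧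
        l₁ ≤ d ∧ l₃ ≤ d) := by
  refine ⟨cubic_unique_root_general l₁ l₂ l₃ (add_pos h₁ h₃), ?_⟩
  simpa [sub_eq_add_neg] using cubic_unique_root_general l₁ (-l₂) l₃ (add_pos h₁ h₃)
end

section
/- If l_1 = l_2 = l_3 = l > 0, then the function A(β_2, β_3) = l² ( sin β_2 + sin β_3 + sin(β_3 − β_2) ) has exactly three critical points on the torus (ℝ/2πℤ)²: one global maximum, one global minimum, and one further (degenerate, "monkey saddle") critical point. -/
/- Equilateral planar 3-arm with edge lengths `l₁ = l₂ = l₃ = l > 0`.  The moduli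
space is the torus `(ℝ/2πℤ)² = Real.Angle × Real.Angle` with coordinates `(β₂, β₃)`;
the doubled oriented area is `A(β₂,β₃) = l² (sin β₂ + sin β₃ + sin (β₃ − β₂))`. -/

noncomputable section

/-- the doubled oriented area of the equilateral 3-arm (lift to ℝ²). -/
def area3eq (l : ℝ) (b₂ b₃ : ℝ) : ℝ :=
  l ^ 2 * (Real.sin b₂ + Real.sin b₃ + Real.sin (b₃ - b₂))

/-- the doubled oriented area as a function on the torus `(ℝ/2πℤ)²`. -/
def area3eqT (l : ℝ) (p : Real.Angle × Real.Angle) : ℝ :=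
  l ^ 2 * (p.1.sin + p.2.sin + (p.2 - p.1).sin)

/-- the set of critical points of the oriented area on the torus. -/
def crit3eq (l : ℝ) : Set (Real.Angle × Real.Angle) :=
  {p | ∀ b₂ b₃ : ℝ, (b₂ : Real.Angle) = p.1 → (b₃ : Real.Angle) = p.2 →
    deriv (fun t => area3eq l t b₃) b₂ = 0 ∧
    deriv (fun t => area3eq l b₂ t) b₃ = 0}

/-! Extrema are found by classifying critical points. At a critical point
`cos β₂ = cos (β₃ - β₂) = -cos β₃`, and equality of cosines means equality of angles up to sign, so
the critical points are exactly the three pairs `(θ, 2θ)` with `3θ = π`. The torus is compact, so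
the maximum of `A` is attained at one of them. Their values are `M`, `0` and `-M` with `M > 0`, so
it is `M`, and `-M` is the minimum since `A` is odd. At the point of value `0` all three sines
vanish, and with them the whole Hessian. -/

open Real ContinuousLinearMap

/-- The configuration `(π/3, 2π/3)`, in which the arm is half of a regular hexagon. It is the
maximum of the oriented area; its mirror image, the negative, is the minimum. -/
def halfHexagon : Angle × Angle := ((π / 3 : ℝ), 2 • ((π / 3 : ℝ) : Angle))

/-- The configuration `(π, 0)`, in which the three edges lie on top of each other. It is the
degenerate critical point of the oriented area. -/
def foldedArm : Angle × Angle := (π, 0)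

theorem hasFDerivAt_area3eq (l : ℝ) (q : ℝ × ℝ) :
    HasFDerivAt (fun q : ℝ × ℝ => area3eq l q.1 q.2)
      (l ^ 2 • (cos q.1 • fst ℝ ℝ ℝ + cos q.2 • snd ℝ ℝ ℝ +
        cos (q.2 - q.1) • (snd ℝ ℝ ℝ - fst ℝ ℝ ℝ))) q :=
  ((hasFDerivAt_fst.sin.add hasFDerivAt_snd.sin).add
    (hasFDerivAt_snd.sub hasFDerivAt_fst).sin).const_mul _

theorem deriv_area3eq_left (l x y : ℝ) :
    deriv (fun t => area3eq l t y) x = l ^ 2 * (cos x - cos (y - x)) := by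
  have h := (hasFDerivAt_area3eq l (x, y)).comp_hasDerivAt x
    ((hasDerivAt_id x).prodMk (hasDerivAt_const x y))
  exact h.deriv.trans (by simp; ring)

theorem deriv_area3eq_right (l x y : ℝ) :
    deriv (fun t => area3eq l x t) y = l ^ 2 * (cos y + cos (y - x)) := by
  have h := (hasFDerivAt_area3eq l (x, y)).comp_hasDerivAt y
    ((hasDerivAt_const y x).prodMk (hasDerivAt_id y))
  exact h.deriv.trans (by simp; ring)

theorem fderiv_fderiv_area3eq (l x y : ℝ) :
    fderiv ℝ (fderiv ℝ (fun q : ℝ × ℝ => area3eq l q.1 q.2)) (x, y) =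
      -(l ^ 2) • (sin x • (fst ℝ ℝ ℝ).smulRight (fst ℝ ℝ ℝ) +
        sin y • (snd ℝ ℝ ℝ).smulRight (snd ℝ ℝ ℝ) +
        sin (y - x) • (snd ℝ ℝ ℝ - fst ℝ ℝ ℝ).smulRight (snd ℝ ℝ ℝ - fst ℝ ℝ ℝ)) := by
  have gradient : fderiv ℝ (fun q : ℝ × ℝ => area3eq l q.1 q.2) = _ :=
    funext fun q => (hasFDerivAt_area3eq l q).fderiv
  have hfst : HasFDerivAt Prod.fst (fst ℝ ℝ ℝ) (x, y) := hasFDerivAt_fst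
  have hsnd : HasFDerivAt Prod.snd (snd ℝ ℝ ℝ) (x, y) := hasFDerivAt_snd
  rw [gradient]
  refine ((((hfst.cos.smul_const (fst ℝ ℝ ℝ)).add (hsnd.cos.smul_const (snd ℝ ℝ ℝ))).add
    ((hsnd.sub hfst).cos.smul_const (snd ℝ ℝ ℝ - fst ℝ ℝ ℝ))).const_smul (l ^ 2)).fderiv.trans ?_
  ext <;> simp

theorem area3eqT_coe (l x y : ℝ) : area3eqT l ((x : Angle), (y : Angle)) = area3eq l x y := by
  simp only [area3eqT, area3eq, ← Angle.coe_sub, Angle.sin_coe]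

theorem area3eqT_neg (l : ℝ) (p : Angle × Angle) : area3eqT l (-p) = -area3eqT l p := by
  simp only [area3eqT, Prod.fst_neg, Prod.snd_neg, ← neg_sub', Angle.sin_neg]
  ring

theorem area3eqT_halfHexagon (l : ℝ) : area3eqT l halfHexagon = l ^ 2 * (3 * √3 / 2) := by
  simp only [area3eqT, halfHexagon, two_nsmul, add_sub_cancel_right, Angle.sin_add, Angle.sin_coe,
    Angle.cos_coe, sin_pi_div_three, cos_pi_div_three]
  ring

theorem area3eqT_halfHexagon_pos {l : ℝ} (hl : l ≠ 0) : 0 < area3eqT l halfHexagon := by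
  rw [area3eqT_halfHexagon]
  positivity

theorem area3eqT_foldedArm (l : ℝ) : area3eqT l foldedArm = 0 := by
  simp [area3eqT, foldedArm]

theorem continuous_area3eqT (l : ℝ) : Continuous (area3eqT l) := by
  have := Angle.continuous_sin
  unfold area3eqT
  fun_prop

instance : CompactSpace Angle :=
  have : Fact (0 < 2 * π) := ⟨two_pi_pos⟩
  inferInstanceAs (CompactSpace (AddCircle (2 * π)))

theorem mem_crit3eq_iff_cos {l : ℝ} (hl : l ≠ 0) (a b : Angle) :
    (a, b) ∈ crit3eq l ↔ a.cos = (b - a).cos ∧ b.cos = -(b - a).cos := by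
  have lift_iff (x y : ℝ) : (deriv (fun t => area3eq l t y) x = 0 ∧
      deriv (fun t => area3eq l x t) y = 0) ↔
      (x : Angle).cos = ((y : Angle) - x).cos ∧ (y : Angle).cos = -((y : Angle) - x).cos := by
    simp [deriv_area3eq_left, deriv_area3eq_right, ← Angle.coe_sub, hl, sub_eq_zero,
      add_eq_zero_iff_eq_neg]
  constructor
  · intro h
    induction a using Angle.induction_on with | _ x
    induction b using Angle.induction_on with | _ y
    exact (lift_iff x y).1 (h x y rfl rfl)
  · rintro h x y rfl rfl
    exact (lift_iff x y).2 h

theorem cos_eq_cos_sub_iff (a b : Angle) : a.cos = (b - a).cos ↔ b = 2 • a ∨ b = 0 := by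
  rw [Angle.cos_eq_iff_eq_or_eq_neg]
  refine or_congr ⟨fun h => ?_, fun h => ?_⟩ ⟨fun h => ?_, fun h => ?_⟩
  · linear_combination (norm := abel) -h
  · linear_combination (norm := abel) -h
  · linear_combination (norm := abel) h
  · linear_combination (norm := abel) h

theorem cos_eq_neg_cos_sub_iff (a b : Angle) :
    b.cos = -(b - a).cos ↔ a = π ∨ 2 • b = a + π := by
  have two_pi : (π : Angle) + π = 0 := Angle.coe_pi_add_coe_pi
  rw [← Angle.cos_add_pi, Angle.cos_eq_iff_eq_or_eq_neg]
  refine or_congr ⟨fun h => ?_, fun h => ?_⟩ ⟨fun h => ?_, fun h => ?_⟩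
  · linear_combination (norm := abel) h
  · linear_combination (norm := abel) h
  · linear_combination (norm := abel) h - two_pi
  · linear_combination (norm := abel) h + two_pi

theorem mem_crit3eq_iff {l : ℝ} (hl : l ≠ 0) (a b : Angle) :
    (a, b) ∈ crit3eq l ↔ 3 • a = π ∧ b = 2 • a := by
  rw [mem_crit3eq_iff_cos hl, cos_eq_cos_sub_iff, cos_eq_neg_cos_sub_iff]
  constructor
  · rintro ⟨rfl | rfl, rfl | h⟩
    · simp [succ_nsmul]
    · exact ⟨by linear_combination (norm := abel) h, rfl⟩
    · simp [succ_nsmul]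
    · obtain rfl : a = π := by
        rw [smul_zero, eq_comm, add_eq_zero_iff_eq_neg, Angle.neg_coe_pi] at h
        exact h
      simp [succ_nsmul]
  · rintro ⟨h, rfl⟩
    exact ⟨Or.inl rfl, Or.inr (by linear_combination (norm := abel) h)⟩

theorem three_nsmul_eq_pi_iff (θ : Angle) :
    3 • θ = π ↔ θ = (π / 3 : ℝ) ∨ θ = (π : Angle) ∨ θ = -(π / 3 : ℝ) := by
  have third : 3 • ((π / 3 : ℝ) : Angle) = π := by
    rw [← Angle.coe_nsmul, nsmul_eq_mul, Nat.cast_ofNat, mul_div_cancel₀ π three_ne_zero]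
  have hneg : ((π / 3 : ℝ) : Angle) + 2 • ((2 * π / 3 : ℝ) : Angle) = -(π / 3 : ℝ) := by
    rw [← Angle.coe_nsmul, ← Angle.coe_add, ← Angle.coe_neg, Angle.angle_eq_iff_two_pi_dvd_sub]
    exact ⟨1, by simp; ring⟩
  have hpi : ((π / 3 : ℝ) : Angle) + ((2 * π / 3 : ℝ) : Angle) = (π : Angle) := by
    rw [← Angle.coe_add]; congr 1; ring
  conv_lhs => rw [← third, Angle.nsmul_eq_iff three_ne_zero]
  simp [Fin.exists_fin_succ, hpi, hneg]

theorem crit3eq_eq {l : ℝ} (hl : l ≠ 0) :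
    crit3eq l = {halfHexagon, -halfHexagon, foldedArm} := by
  ext ⟨a, b⟩
  simp only [mem_crit3eq_iff hl, three_nsmul_eq_pi_iff, halfHexagon, foldedArm,
    Set.mem_insert_iff, Set.mem_singleton_iff, Prod.neg_mk, Prod.mk.injEq, ← smul_neg]
  constructor
  · rintro ⟨rfl | rfl | rfl, rfl⟩ <;> simp
  · rintro (⟨rfl, rfl⟩ | ⟨rfl, rfl⟩ | ⟨rfl, rfl⟩) <;> simp

theorem mem_crit3eq_of_isLocalExtr {l : ℝ} {p : Angle × Angle}
    (h : IsLocalExtr (area3eqT l) p) : p ∈ crit3eq l := by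
  intro x y hx hy
  obtain rfl : ((x : Angle), (y : Angle)) = p := Prod.ext hx hy
  have hleft : Continuous fun t : ℝ => ((t : Angle), (y : Angle)) := by fun_prop
  have hright : Continuous fun t : ℝ => ((x : Angle), (t : Angle)) := by fun_prop
  simp only [← area3eqT_coe]
  have h₂ : IsLocalExtr (area3eqT l ∘ fun t : ℝ => ((t : Angle), (y : Angle))) x :=
    IsExtrFilter.comp_tendsto h (hleft.tendsto x)
  have h₃ : IsLocalExtr (area3eqT l ∘ fun t : ℝ => ((x : Angle), (t : Angle))) y :=
    IsExtrFilter.comp_tendsto h (hright.tendsto y)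
  exact ⟨h₂.deriv_eq_zero, h₃.deriv_eq_zero⟩

theorem area3eqT_le_halfHexagon {l : ℝ} (hl : l ≠ 0) (q : Angle × Angle) :
    area3eqT l q ≤ area3eqT l halfHexagon := by
  obtain ⟨p, -, hp⟩ := isCompact_univ.exists_isMaxOn Set.univ_nonempty
    (continuous_area3eqT l).continuousOn
  have hcrit : p ∈ crit3eq l :=
    mem_crit3eq_of_isLocalExtr (hp.isExtr.isLocalExtr Filter.univ_mem)
  refine (hp (Set.mem_univ q)).trans ?_
  have hpos := area3eqT_halfHexagon_pos hl
  rw [crit3eq_eq hl] at hcrit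
  obtain rfl | rfl | rfl := hcrit
  · rfl
  · rw [area3eqT_neg]
    linarith
  · rw [area3eqT_foldedArm]
    exact hpos.le

theorem area3eqT_neg_halfHexagon_le {l : ℝ} (hl : l ≠ 0) (q : Angle × Angle) :
    area3eqT l (-halfHexagon) ≤ area3eqT l q := by
  have h := area3eqT_le_halfHexagon hl (-q)
  rw [area3eqT_neg] at h ⊢
  linarith

theorem fderiv_fderiv_area3eq_foldedArm (l : ℝ) {x y : ℝ} (hx : (x : Angle) = foldedArm.1)
    (hy : (y : Angle) = foldedArm.2) :
    fderiv ℝ (fderiv ℝ (fun q : ℝ × ℝ => area3eq l q.1 q.2)) (x, y) = 0 := by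
  have hsin_x : sin x = 0 := by rw [← Angle.sin_coe, hx, foldedArm, Angle.sin_coe_pi]
  have hsin_y : sin y = 0 := by rw [← Angle.sin_coe, hy, foldedArm, Angle.sin_zero]
  have hsin_sub : sin (y - x) = 0 := by simp [sin_sub, hsin_x, hsin_y]
  rw [fderiv_fderiv_area3eq, hsin_x, hsin_y, hsin_sub]
  ext <;> simp

/-- For the equilateral 3-arm, `A` has exactly three critical points
on the torus: a global maximum, a global minimum, and one further degenerate
("monkey saddle") critical point. -/
theorem equilateral_three_critical_points (l : ℝ) (hl : 0 < l) :
    ∃ pmax pmin psad : Real.Angle × Real.Angle,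
      pmax ≠ pmin ∧ pmax ≠ psad ∧ pmin ≠ psad ∧
      crit3eq l = {pmax, pmin, psad} ∧
      (∀ q : Real.Angle × Real.Angle, area3eqT l q ≤ area3eqT l pmax) ∧
      (∀ q : Real.Angle × Real.Angle, area3eqT l pmin ≤ area3eqT l q) ∧
      (∀ b₂ b₃ : ℝ, (b₂ : Real.Angle) = psad.1 → (b₃ : Real.Angle) = psad.2 →
        ¬Function.Bijective
          ⇑(fderiv ℝ (fderiv ℝ (fun q : ℝ × ℝ => area3eq l q.1 q.2)) (b₂, b₃))) := by
  have hmax := area3eqT_halfHexagon_pos hl.ne'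
  have hmin : area3eqT l (-halfHexagon) < 0 := by rwa [area3eqT_neg, neg_lt_zero]
  have hsad := area3eqT_foldedArm l
  refine ⟨halfHexagon, -halfHexagon, foldedArm, ?_, ?_, ?_, crit3eq_eq hl.ne',
    area3eqT_le_halfHexagon hl.ne', area3eqT_neg_halfHexagon_le hl.ne', fun b₂ b₃ h₂ h₃ => ?_⟩
  · exact ne_of_apply_ne (area3eqT l) (hmin.trans hmax).ne'
  · exact ne_of_apply_ne (area3eqT l) (hsad ▸ hmax.ne')
  · exact ne_of_apply_ne (area3eqT l) (hsad ▸ hmin.ne)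
  · rw [fderiv_fderiv_area3eq_foldedArm l h₂ h₃]
    intro hbij
    obtain ⟨u, hu⟩ := exists_ne (0 : ℝ × ℝ)
    exact hu (hbij.injective rfl)

end
end
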